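/- arXiv:2008.02152 — 7 statements merged into one kernel-verified Lean document; each statement's English description precedes it below -/
import Mathlib

section
/- Let H be a real Hilbert space, M₀ ⊆ H a closed linear subspace, r₀, r ∈ [0,1), and set M := S(M₀, r₀). Then S(M, r) = {v ∈ H : v ≠ 0 and inf_{u ∈ M, u ≠ 0} θ(u,v) ≤ arcsin r} ∪ {0}, i.e., a nonzero vector v belongs to S(M, r) exactly when the infimum over nonzero u ∈ M of the acute angle θ(u,v) is at most arcsin r. -/
open RealInnerProductSpace

/-- The conelike neighborhood `S(M, r)` of a set `M` in a real Hilbert space. -/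
noncomputable def coneNbhd {H : Type*} [NormedAddCommGroup H] [InnerProductSpace ℝ H]
    (M : Set H) (r : ℝ) : Set H :=
  {v | sInf {d : ℝ | ∃ u ∈ M, u ≠ 0 ∧ d = ‖v - u‖ / ‖u‖} ≤ r} ∪ {0}

/-- The acute angle between two vectors of a real inner product space. -/
noncomputable def acuteAngle {H : Type*} [NormedAddCommGroup H] [InnerProductSpace ℝ H]
    (x y : H) : ℝ :=
  Real.arccos (|⟪x, y⟫| / (‖x‖ * ‖y‖))

/-! For a set `M` stable under nonzero scalars and any `v`, the infimum of the relative distances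
`‖v - u‖ / ‖u‖` is the sine of the infimum of the acute angles `θ(u, v)`. Indeed, replacing `u` by
its multiples `t⁻¹ • u` turns the relative distance into `‖u - t • v‖ / ‖u‖`, whose minimum over all
real `t` is `sin θ(u, v)` by Pythagoras; excluding `t = 0` does not change the infimum, by
continuity. The sine being continuous and monotone on `[0, π / 2]`, it commutes with the remaining
infimum over `u`. The angles do not see nonzero scalars either, so `S(M, r)` is again stable
under them. -/

section

open Set Real

section Module

variable {E : Type*} [AddCommGroup E] [Module ℝ E]

/-- A double cone: a set stable under multiplication by nonzero reals. Scaling by `0` is excluded,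
so a double cone need not contain the origin. On such sets the angle to a vector determines its
relative distance. -/
def IsDoubleCone (M : Set E) : Prop :=
  ∀ ⦃c : ℝ⦄, c ≠ 0 → ∀ ⦃u⦄, u ∈ M → c • u ∈ M

lemma isDoubleCone_submodule (M : Submodule ℝ E) : IsDoubleCone (M : Set E) :=
  fun c _ _ hu => M.smul_mem c hu

end Module

variable {H : Type*} [NormedAddCommGroup H] [InnerProductSpace ℝ H]

/-- The distances from `v` to the nonzero vectors `u` of `M`, relative to `‖u‖`; their infimum
defines `coneNbhd M`. -/
def relDistances (M : Set H) (v : H) : Set ℝ :=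
  {d | ∃ u ∈ M, u ≠ 0 ∧ d = ‖v - u‖ / ‖u‖}

/-- The acute angles between `v` and the nonzero vectors of `M`; their infimum is the angle from `v`
to `M`. -/
def acuteAngles (M : Set H) (v : H) : Set ℝ :=
  {a | ∃ u ∈ M, u ≠ 0 ∧ a = acuteAngle u v}

lemma acuteAngle_mem_Icc (u v : H) : acuteAngle u v ∈ Icc 0 (π / 2) :=
  ⟨arccos_nonneg _, arccos_le_pi_div_two.mpr (by positivity)⟩

lemma sin_acuteAngle_nonneg (u v : H) : 0 ≤ sin (acuteAngle u v) :=
  sin_arccos _ ▸ sqrt_nonneg _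

lemma acuteAngle_smul_right (u v : H) {c : ℝ} (hc : c ≠ 0) :
    acuteAngle u (c • v) = acuteAngle u v := by
  rw [acuteAngle, acuteAngle, real_inner_smul_right, abs_mul, norm_smul, norm_eq_abs,
    mul_left_comm, mul_div_mul_left _ _ (abs_ne_zero.mpr hc)]

lemma norm_mul_cos_acuteAngle (u v : H) : ‖u‖ * cos (acuteAngle u v) = |⟪u, v⟫| / ‖v‖ := by
  have h_le : |⟪u, v⟫| / (‖u‖ * ‖v‖) ≤ 1 :=
    div_le_one_of_le₀ (abs_real_inner_le_norm u v) (by positivity)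
  rw [acuteAngle, cos_arccos (neg_one_lt_zero.le.trans (by positivity)) h_le]
  rcases eq_or_ne u 0 with rfl | hu
  · simp
  · rw [← mul_div_assoc, mul_div_mul_left _ _ (norm_ne_zero_iff.mpr hu)]

lemma norm_sub_smul_sq_eq (u v : H) (t : ℝ) :
    ‖u - t • v‖ ^ 2 =
      (‖u‖ * sin (acuteAngle u v)) ^ 2 + (t * ‖v‖ - ⟪u, v⟫ / ‖v‖) ^ 2 := by
  have h_sin : (‖u‖ * sin (acuteAngle u v)) ^ 2 = ‖u‖ ^ 2 - (⟪u, v⟫ / ‖v‖) ^ 2 := by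
    rw [mul_pow, sin_sq, mul_sub, mul_one, ← mul_pow, norm_mul_cos_acuteAngle, div_pow, sq_abs,
      div_pow]
  have h_inner : ‖v‖ * (⟪u, v⟫ / ‖v‖) = ⟪u, v⟫ :=
    mul_div_cancel_of_imp' fun hv => by simp [norm_eq_zero.mp hv]
  rw [norm_sub_sq_real, real_inner_smul_right, norm_smul, norm_eq_abs, mul_pow, sq_abs, h_sin]
  linear_combination 2 * t * h_inner

lemma isLeast_range_norm_sub_smul (u v : H) :
    IsLeast (range fun t : ℝ => ‖u - t • v‖) (‖u‖ * sin (acuteAngle u v)) := by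
  have h_nonneg : 0 ≤ ‖u‖ * sin (acuteAngle u v) :=
    mul_nonneg (norm_nonneg u) (sin_acuteAngle_nonneg u v)
  constructor
  · refine ⟨⟪u, v⟫ / ‖v‖ / ‖v‖, (sq_eq_sq₀ (norm_nonneg _) h_nonneg).mp ?_⟩
    have h_foot : ⟪u, v⟫ / ‖v‖ / ‖v‖ * ‖v‖ = ⟪u, v⟫ / ‖v‖ :=
      div_mul_cancel_of_imp fun hv => by simp [hv]
    rw [norm_sub_smul_sq_eq, h_foot, sub_self, zero_pow two_ne_zero, add_zero]
  · rintro _ ⟨t, rfl⟩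
    refine (sq_le_sq₀ h_nonneg (norm_nonneg _)).mp ?_
    rw [norm_sub_smul_sq_eq]
    exact le_add_of_nonneg_right (sq_nonneg _)

lemma norm_sub_inv_smul_div_norm_inv_smul (u v : H) {t : ℝ} (ht : t ≠ 0) :
    ‖v - t⁻¹ • u‖ / ‖t⁻¹ • u‖ = ‖u - t • v‖ / ‖u‖ := by
  have h_factor : v - t⁻¹ • u = t⁻¹ • (t • v - u) := by rw [smul_sub, inv_smul_smul₀ ht]
  rw [h_factor, norm_smul, norm_smul, norm_sub_rev,
    mul_div_mul_left _ _ (norm_ne_zero_iff.mpr (inv_ne_zero ht))]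

lemma isGLB_norm_sub_smul_div_norm_smul {u : H} (hu : u ≠ 0) (v : H) :
    IsGLB ((fun c : ℝ => ‖v - c • u‖ / ‖c • u‖) '' {0}ᶜ) (sin (acuteAngle u v)) := by
  have h_reparam : (fun c : ℝ => ‖v - c • u‖ / ‖c • u‖) '' {0}ᶜ =
      (fun t : ℝ => ‖u - t • v‖ / ‖u‖) '' {0}ᶜ := by
    have h_inv : ({0}ᶜ : Set ℝ) = Inv.inv '' {0}ᶜ := by simp
    conv_lhs => rw [h_inv, image_image]
    exact image_congr fun t ht => norm_sub_inv_smul_div_norm_inv_smul u v ht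
  have h_least : IsLeast (range fun t : ℝ => ‖u - t • v‖ / ‖u‖) (sin (acuteAngle u v)) := by
    have h_div := (monotone_div_right_of_nonneg (norm_nonneg u)).map_isLeast
      (isLeast_range_norm_sub_smul u v)
    rwa [mul_div_cancel_left₀ _ (norm_ne_zero_iff.mpr hu), ← range_comp] at h_div
  have h_cont : Continuous fun t : ℝ => ‖u - t • v‖ / ‖u‖ := by fun_prop
  rw [h_reparam]
  exact (isGLB_congr ((dense_compl_singleton 0).lowerBounds_image h_cont)).mpr h_least.isGLB

lemma lowerBounds_relDistances {M : Set H} (hM : IsDoubleCone M) (v : H) :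
    lowerBounds (relDistances M v) = lowerBounds (sin '' acuteAngles M v) := by
  ext b
  constructor
  · rintro hb _ ⟨_, ⟨u, hu, hu₀, rfl⟩, rfl⟩
    refine (isGLB_norm_sub_smul_div_norm_smul hu₀ v).2 ?_
    rintro _ ⟨c, hc, rfl⟩
    exact hb ⟨c • u, hM hc hu, smul_ne_zero hc hu₀, rfl⟩
  · rintro hb _ ⟨u, hu, hu₀, rfl⟩
    calc b ≤ sin (acuteAngle u v) := hb ⟨_, ⟨u, hu, hu₀, rfl⟩, rfl⟩
      _ ≤ ‖v - u‖ / ‖u‖ :=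
        (isGLB_norm_sub_smul_div_norm_smul hu₀ v).1 ⟨1, one_ne_zero, by simp only [one_smul]⟩

lemma acuteAngles_subset_Icc (M : Set H) (v : H) : acuteAngles M v ⊆ Icc 0 (π / 2) := by
  rintro _ ⟨u, -, -, rfl⟩
  exact acuteAngle_mem_Icc u v

lemma sInf_acuteAngles_mem_Icc (M : Set H) (v : H) : sInf (acuteAngles M v) ∈ Icc 0 (π / 2) := by
  have h_Icc := acuteAngles_subset_Icc M v
  refine ⟨sInf_nonneg fun a ha => (h_Icc ha).1, ?_⟩
  rcases (acuteAngles M v).eq_empty_or_nonempty with h_empty | ⟨a, ha⟩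
  · rw [h_empty, sInf_empty]
    positivity
  · exact (csInf_le ⟨0, fun x hx => (h_Icc hx).1⟩ ha).trans (h_Icc ha).2

lemma isGLB_sin_image_acuteAngles {M : Set H} {v : H} (h_nonempty : (acuteAngles M v).Nonempty) :
    IsGLB (sin '' acuteAngles M v) (sin (sInf (acuteAngles M v))) := by
  have h_Icc := acuteAngles_subset_Icc M v
  have h_mono : MonotoneOn sin (acuteAngles M v) :=
    strictMonoOn_sin.monotoneOn.mono
      (h_Icc.trans (Icc_subset_Icc_left (by linarith [pi_pos])))
  exact (isGLB_csInf h_nonempty ⟨0, fun a ha => (h_Icc ha).1⟩).isGLB_of_tendsto h_mono h_nonempty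
    continuous_sin.continuousWithinAt

lemma sInf_relDistances_eq_sin {M : Set H} (hM : IsDoubleCone M) (v : H) :
    sInf (relDistances M v) = sin (sInf (acuteAngles M v)) := by
  by_cases h_exists : ∃ u ∈ M, u ≠ 0
  · obtain ⟨u, hu, hu₀⟩ := h_exists
    exact ((isGLB_congr (lowerBounds_relDistances hM v)).mpr
      (isGLB_sin_image_acuteAngles ⟨_, u, hu, hu₀, rfl⟩)).csInf_eq ⟨_, u, hu, hu₀, rfl⟩
  · have h_dist : relDistances M v = ∅ :=
      eq_empty_of_forall_notMem fun _ ⟨u, hu, hu₀, _⟩ => h_exists ⟨u, hu, hu₀⟩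
    have h_angle : acuteAngles M v = ∅ :=
      eq_empty_of_forall_notMem fun _ ⟨u, hu, hu₀, _⟩ => h_exists ⟨u, hu, hu₀⟩
    -- Both infima are taken over the empty set, so they have the junk value `0 = sin 0`.
    rw [h_dist, h_angle, sInf_empty, sin_zero]

lemma IsDoubleCone.coneNbhd {M : Set H} (hM : IsDoubleCone M) (r : ℝ) :
    IsDoubleCone (coneNbhd M r) := by
  rintro c hc v (hv | rfl)
  · have h_angles : acuteAngles M (c • v) = acuteAngles M v := by
      simp only [acuteAngles, acuteAngle_smul_right _ _ hc]
    have h_dist : sInf (relDistances M (c • v)) = sInf (relDistances M v) := by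
      rw [sInf_relDistances_eq_sin hM, sInf_relDistances_eq_sin hM, h_angles]
    exact Or.inl (h_dist.trans_le hv)
  · exact Or.inr (smul_zero c)

theorem stmt2_general {M : Set H} (hM : IsDoubleCone M) {r : ℝ} (hr : r ∈ Icc (-1) 1) :
    coneNbhd M r =
      {v : H | v ≠ 0 ∧
        sInf {a : ℝ | ∃ u ∈ M, u ≠ 0 ∧ a = acuteAngle u v} ≤ arcsin r} ∪ {0} := by
  have h_iff (v : H) : sInf (relDistances M v) ≤ r ↔ sInf (acuteAngles M v) ≤ arcsin r := by
    have h_Icc : sInf (acuteAngles M v) ∈ Icc (-(π / 2)) (π / 2) :=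
      Icc_subset_Icc_left (by linarith [pi_pos]) (sInf_acuteAngles_mem_Icc M v)
    rw [sInf_relDistances_eq_sin hM, le_arcsin_iff_sin_le h_Icc hr]
  calc coneNbhd M r = {v | sInf (acuteAngles M v) ≤ arcsin r} ∪ {0} :=
        congrArg (· ∪ {0}) (Set.ext h_iff)
    _ = {v | v ≠ 0 ∧ sInf (acuteAngles M v) ≤ arcsin r} ∪ {0} := by
        ext v
        by_cases hv : v = 0 <;> simp [hv]

end

theorem stmt2 {H : Type*} [NormedAddCommGroup H] [InnerProductSpace ℝ H] [CompleteSpace H]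
    (M₀ : Submodule ℝ H) (hclosed : IsClosed (M₀ : Set H))
    (r₀ r : ℝ) (hr₀ : 0 ≤ r₀ ∧ r₀ < 1) (hr : 0 ≤ r ∧ r < 1)
    (M : Set H) (hM : M = coneNbhd (M₀ : Set H) r₀) :
    coneNbhd M r =
      {v : H | v ≠ 0 ∧
        sInf {a : ℝ | ∃ u ∈ M, u ≠ 0 ∧ a = acuteAngle u v} ≤ Real.arcsin r} ∪ {0} := by
  subst hM
  exact stmt2_general ((isDoubleCone_submodule M₀).coneNbhd r₀)
    ⟨neg_one_lt_zero.le.trans hr.1, hr.2.le⟩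
end

section
/- Let H be a real Hilbert space, M₀ ⊆ H a closed linear subspace, r₀, r ∈ [0,1), and set M := S(M₀, r₀). Then the conelike neighborhood and the inverse conelike neighborhood of M coincide: S(M, r) = S̃(M, r). -/
/-- The inverse conelike neighborhood `S̃(M, r)`:
all `v` with `inf_{u ∈ M} ‖v - u‖ ≤ r ‖v‖`. -/
noncomputable def invConeNbhd {H : Type*} [NormedAddCommGroup H] [InnerProductSpace ℝ H]
    (M : Set H) (r : ℝ) : Set H :=
  {v | sInf {d : ℝ | ∃ u ∈ M, d = ‖v - u‖} ≤ r * ‖v‖}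

/-!
Inversion in the sphere of radius `‖v‖` about the origin fixes `v`, preserves the nonzero part of
every set `M` stable under positive dilations, and turns `‖v - u‖ / ‖u‖` into `‖v - u‖ / ‖v‖`.
For `v ≠ 0` the two ratios therefore have the same infimum over the nonzero points of `M`.
The point `u = 0` contributes the value `1` to the second infimum, so it is irrelevant to the
comparison with `r < 1`. This applies to `S(M₀, r₀)`, which inherits its dilations from `M₀`.
-/

open Metric EuclideanGeometry
open scoped Pointwise

theorem infDist_sdiff_singleton {X : Type*} [PseudoMetricSpace X] {s : Set X} {x y : X}
    (h : infDist x s < dist x y) : infDist x (s \ {y}) = infDist x s := by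
  rcases s.eq_empty_or_nonempty with rfl | hs
  · rw [Set.empty_sdiff]
  have exists_near : ∀ ε, infDist x s < ε → ∃ z ∈ s \ {y}, dist x z < ε := fun ε hε ↦ by
    obtain ⟨z, hz, hxz⟩ := (infDist_lt_iff hs).1 (lt_min hε h)
    exact ⟨z, ⟨hz, by rintro rfl; exact (hxz.trans_le (min_le_right _ _)).false⟩,
      hxz.trans_le (min_le_left _ _)⟩
  obtain ⟨z, hz, -⟩ := exists_near _ h
  refine le_antisymm (le_of_forall_gt fun ε hε ↦ ?_)
    (infDist_le_infDist_of_subset Set.sdiff_subset ⟨z, hz⟩)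
  exact (infDist_lt_iff ⟨z, hz⟩).2 (exists_near ε hε)

/-- A cone with apex at the origin: a set stable under multiplication by positive scalars. It may
be nonconvex, and it need not contain the origin. Conelike neighborhoods of subspaces retain this
property, though they are not subspaces. -/
def IsCone {E : Type*} [SMul ℝ E] (M : Set E) : Prop :=
  ∀ ⦃t : ℝ⦄, 0 < t → ∀ ⦃u : E⦄, u ∈ M → t • u ∈ M

namespace IsCone

theorem sdiff_zero {E : Type*} [AddCommGroup E] [Module ℝ E] {M : Set E} (hM : IsCone M) :
    IsCone (M \ {0}) :=
  fun _ ht _ hu ↦ ⟨hM ht hu.1, smul_ne_zero ht.ne' hu.2⟩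

theorem smul_set_eq {E : Type*} [MulAction ℝ E] {M : Set E} (hM : IsCone M) {t : ℝ} (ht : 0 < t) :
    t • M = M := by
  refine (Set.smul_set_subset_iff.2 fun u hu ↦ hM ht hu).antisymm fun u hu ↦ ?_
  exact (Set.mem_smul_set_iff_inv_smul_mem₀ ht.ne' M u).2 (hM (inv_pos.2 ht) hu)

theorem infDist_smul {E : Type*} [SeminormedAddCommGroup E] [NormedSpace ℝ E] {M : Set E}
    (hM : IsCone M) {t : ℝ} (ht : 0 < t) (v : E) : infDist (t • v) M = t * infDist v M := by
  conv_lhs => rw [← hM.smul_set_eq ht]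
  rw [infDist_smul₀ ht.ne', Real.norm_of_nonneg ht.le]

end IsCone

section ConeNbhd

variable {H : Type*} [NormedAddCommGroup H] [InnerProductSpace ℝ H] {M : Set H} {u v : H} {r : ℝ}

theorem norm_sub_inversion_div_norm (hu : u ≠ 0) (hv : v ≠ 0) :
    ‖v - inversion 0 ‖v‖ u‖ / ‖inversion 0 ‖v‖ u‖ = ‖v - u‖ / ‖v‖ := by
  have norm_inversion : ‖inversion 0 ‖v‖ u‖ = ‖v‖ ^ 2 / ‖u‖ := by
    simpa only [dist_zero_right] using dist_inversion_center 0 u ‖v‖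
  have inversion_self_norm : inversion 0 ‖v‖ v = v := by
    simpa only [dist_zero_right] using inversion_dist_center 0 v
  have norm_sub_inversion : ‖v - inversion 0 ‖v‖ u‖ = ‖v‖ ^ 2 / (‖v‖ * ‖u‖) * ‖v - u‖ := by
    simpa only [inversion_self_norm, dist_zero_right, dist_eq_norm, sub_zero] using
      dist_inversion_inversion hv hu ‖v‖
  rw [norm_sub_inversion, norm_inversion]
  field_simp

theorem IsCone.image_inversion_sdiff_zero (hM : IsCone M) {R : ℝ} (hR : R ≠ 0) :
    inversion 0 R '' (M \ {0}) = M \ {0} := by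
  have mapsTo : Set.MapsTo (inversion 0 R) (M \ {0}) (M \ {0}) := fun u hu ↦ by
    have hu0 : u ≠ 0 := hu.2
    simpa only [inversion, vsub_eq_sub, sub_zero, vadd_eq_add, add_zero, dist_zero_right] using
      hM.sdiff_zero (show 0 < (R / ‖u‖) ^ 2 by positivity) hu
  exact mapsTo.image_subset.antisymm fun u hu ↦ ⟨_, mapsTo hu, inversion_inversion 0 hR u⟩

theorem IsCone.sInf_norm_sub_div_norm (hM : IsCone M) (hv : v ≠ 0) :
    sInf ((fun u ↦ ‖v - u‖ / ‖u‖) '' (M \ {0})) = infDist v (M \ {0}) / ‖v‖ := by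
  have image_eq : (fun u ↦ ‖v - u‖ / ‖u‖) '' (M \ {0}) =
      (fun u ↦ ‖v - u‖ / ‖v‖) '' (M \ {0}) := by
    conv_lhs => rw [← hM.image_inversion_sdiff_zero (norm_ne_zero_iff.2 hv), Set.image_image]
    exact Set.image_congr fun u hu ↦ norm_sub_inversion_div_norm hu.2 hv
  rw [image_eq, sInf_image', infDist_eq_iInf, div_eq_mul_inv,
    Real.iInf_mul_of_nonneg (inv_nonneg.2 (norm_nonneg v))]
  simp only [dist_eq_norm, div_eq_mul_inv]

theorem mem_coneNbhd_iff_sInf_image (hv : v ≠ 0) :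
    v ∈ coneNbhd M r ↔ sInf ((fun u ↦ ‖v - u‖ / ‖u‖) '' (M \ {0})) ≤ r := by
  have image_eq : (fun u ↦ ‖v - u‖ / ‖u‖) '' (M \ {0}) =
      {d : ℝ | ∃ u ∈ M, u ≠ 0 ∧ d = ‖v - u‖ / ‖u‖} := by
    ext d
    simp [and_assoc, eq_comm]
  rw [image_eq]
  exact or_iff_left hv

theorem IsCone.mem_coneNbhd_iff (hM : IsCone M) (hv : v ≠ 0) :
    v ∈ coneNbhd M r ↔ infDist v (M \ {0}) ≤ r * ‖v‖ := by
  rw [mem_coneNbhd_iff_sInf_image hv, hM.sInf_norm_sub_div_norm hv,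
    div_le_iff₀ (norm_pos_iff.2 hv)]

theorem mem_invConeNbhd_iff : v ∈ invConeNbhd M r ↔ infDist v M ≤ r * ‖v‖ := by
  have image_eq : dist v '' M = {d : ℝ | ∃ u ∈ M, d = ‖v - u‖} := by
    ext d
    simp [dist_eq_norm, eq_comm]
  rw [infDist_eq_iInf, ← sInf_image', image_eq]
  rfl

theorem zero_mem_coneNbhd : (0 : H) ∈ coneNbhd M r :=
  Or.inr rfl

theorem zero_mem_invConeNbhd (h0 : (0 : H) ∈ M) : (0 : H) ∈ invConeNbhd M r := by
  rw [mem_invConeNbhd_iff, infDist_zero_of_mem h0, norm_zero, mul_zero]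

theorem IsCone.coneNbhd_eq_invConeNbhd (hM : IsCone M) (h0 : (0 : H) ∈ M) (hne : M.Nontrivial)
    (hr : r < 1) : coneNbhd M r = invConeNbhd M r := by
  ext v
  rcases eq_or_ne v 0 with rfl | hv
  · exact iff_of_true zero_mem_coneNbhd (zero_mem_invConeNbhd h0)
  rw [hM.mem_coneNbhd_iff hv, mem_invConeNbhd_iff]
  constructor <;> intro h
  · exact (infDist_le_infDist_of_subset Set.sdiff_subset (hne.exists_ne 0)).trans h
  · have infDist_lt : infDist v M < dist v 0 := by
      rw [dist_zero_right]
      exact h.trans_lt (mul_lt_of_lt_one_left (norm_pos_iff.2 hv) hr)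
    rwa [infDist_sdiff_singleton infDist_lt]

theorem IsCone.isCone_coneNbhd (hM : IsCone M) : IsCone (coneNbhd M r) := by
  intro t ht v hv
  rcases eq_or_ne v 0 with rfl | hv0
  · rwa [smul_zero]
  rw [hM.mem_coneNbhd_iff hv0] at hv
  rw [hM.mem_coneNbhd_iff (smul_ne_zero ht.ne' hv0), hM.sdiff_zero.infDist_smul ht, norm_smul,
    Real.norm_of_nonneg ht.le, mul_left_comm]
  exact mul_le_mul_of_nonneg_left hv ht.le

theorem IsCone.nontrivial_coneNbhd [Nontrivial H] (hM : IsCone M) (hr : 0 ≤ r) :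
    (coneNbhd M r).Nontrivial := by
  obtain ⟨v, hv, hv0⟩ : ∃ v ∈ coneNbhd M r, v ≠ 0 := by
    rcases (M \ {0}).eq_empty_or_nonempty with hM0 | ⟨u, hu⟩
    -- Without nonzero points in `M` the infimum is `sInf ∅ = 0`, so the neighborhood is everything.
    · obtain ⟨v, hv⟩ := exists_ne (0 : H)
      refine ⟨v, (hM.mem_coneNbhd_iff hv).2 ?_, hv⟩
      rw [hM0, infDist_empty]
      positivity
    · refine ⟨u, (hM.mem_coneNbhd_iff hu.2).2 ?_, hu.2⟩
      rw [infDist_zero_of_mem hu]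
      positivity
  exact ⟨v, hv, 0, zero_mem_coneNbhd, hv0⟩

end ConeNbhd

theorem stmt3_general {H : Type*} [NormedAddCommGroup H] [InnerProductSpace ℝ H]
    {M₀ : Set H} (hM₀ : IsCone M₀) {r₀ r : ℝ} (hr₀ : 0 ≤ r₀) (hr : r < 1) :
    coneNbhd (coneNbhd M₀ r₀) r = invConeNbhd (coneNbhd M₀ r₀) r := by
  rcases subsingleton_or_nontrivial H with _ | _
  · rw [Subsingleton.eq_univ_of_nonempty ⟨0, zero_mem_coneNbhd⟩,
      Subsingleton.eq_univ_of_nonempty ⟨0, zero_mem_invConeNbhd zero_mem_coneNbhd⟩]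
  · exact hM₀.isCone_coneNbhd.coneNbhd_eq_invConeNbhd zero_mem_coneNbhd
      (hM₀.nontrivial_coneNbhd hr₀) hr

theorem stmt3 {H : Type*} [NormedAddCommGroup H] [InnerProductSpace ℝ H] [CompleteSpace H]
    (M₀ : Submodule ℝ H) (hclosed : IsClosed (M₀ : Set H))
    (r₀ r : ℝ) (hr₀ : 0 ≤ r₀ ∧ r₀ < 1) (hr : 0 ≤ r ∧ r < 1)
    (M : Set H) (hM : M = coneNbhd (M₀ : Set H) r₀) :
    coneNbhd M r = invConeNbhd M r := by
  subst hM
  exact stmt3_general (fun t _ _ hu ↦ M₀.smul_mem t hu) hr₀.1 hr.2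
end

section
/- Let H be a real inner product space and let x, y, z ∈ H be nonzero vectors. Then the acute angle satisfies the triangle inequality θ(x,y) ≤ θ(x,z) + θ(z,y). -/
open RealInnerProductSpace

/-!
The acute angle is unchanged when a vector is replaced by its negative, so `x` and `y` can be
oriented to have nonnegative inner product with `z`. Both angles on the right are then ordinary
angles, which satisfy the triangle inequality, and the ordinary angle dominates the acute one.
-/

open InnerProductGeometry

section AcuteAngle

variable {H : Type*} [NormedAddCommGroup H] [InnerProductSpace ℝ H]

@[simp]
theorem acuteAngle_neg_left (x y : H) : acuteAngle (-x) y = acuteAngle x y := by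
  simp only [acuteAngle, inner_neg_left, abs_neg, norm_neg]

@[simp]
theorem acuteAngle_neg_right (x y : H) : acuteAngle x (-y) = acuteAngle x y := by
  simp only [acuteAngle, inner_neg_right, abs_neg, norm_neg]

theorem acuteAngle_le_angle (x y : H) : acuteAngle x y ≤ angle x y := by
  unfold acuteAngle angle
  gcongr
  exact le_abs_self _

theorem acuteAngle_eq_angle_of_inner_nonneg {x y : H} (h : 0 ≤ ⟪x, y⟫) :
    acuteAngle x y = angle x y := by
  rw [acuteAngle, abs_of_nonneg h, angle]

end AcuteAngle

theorem stmt5 {H : Type*} [NormedAddCommGroup H] [InnerProductSpace ℝ H]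
    (x y z : H) (hx : x ≠ 0) (hy : y ≠ 0) (hz : z ≠ 0) :
    acuteAngle x y ≤ acuteAngle x z + acuteAngle z y := by
  wlog hxz : 0 ≤ ⟪x, z⟫ generalizing x
  · have hneg : 0 ≤ ⟪-x, z⟫ := by
      rw [inner_neg_left]
      exact neg_nonneg.mpr (le_of_not_ge hxz)
    simpa only [acuteAngle_neg_left] using this (-x) (neg_ne_zero.mpr hx) hneg
  wlog hzy : 0 ≤ ⟪z, y⟫ generalizing y
  · have hneg : 0 ≤ ⟪z, -y⟫ := by
      rw [inner_neg_right]
      exact neg_nonneg.mpr (le_of_not_ge hzy)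
    simpa only [acuteAngle_neg_right] using this (-y) (neg_ne_zero.mpr hy) hneg
  calc
    acuteAngle x y ≤ angle x y := acuteAngle_le_angle x y
    _ ≤ angle x z + angle z y := angle_le_angle_add_angle x z y
    _ = acuteAngle x z + acuteAngle z y := by
      rw [acuteAngle_eq_angle_of_inner_nonneg hxz, acuteAngle_eq_angle_of_inner_nonneg hzy]
end

section
/- Let H be a real inner product space and let u, v ∈ H be nonzero vectors. Setting w := u + v, one has |⟨u, v⟩| / (‖u‖·‖v‖) ≥ (‖u‖ − ‖w‖) / (‖u‖ + ‖w‖). Consequently, if (w_k = u_k + v_k) is a sequence with u_k, v_k nonzero and ‖w_k‖/‖u_k‖ → 0, then cos θ(u_k, v_k) → 1. -/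
open RealInnerProductSpace

/-!
Put `w = u + v`. Since `⟪u, v⟫ = ⟪u, w⟫ - ‖u‖ ^ 2`, Cauchy–Schwarz gives
`‖u‖ * (‖u‖ - ‖w‖) ≤ |⟪u, v⟫|`; multiplying by `‖v‖ ≤ ‖u‖ + ‖w‖` and dividing yields the
inequality. Its left side equals `(1 - r) / (1 + r)` with `r = ‖w‖ / ‖u‖`, so as `r → 0` the cosine
is squeezed between a quantity tending to `1` and the constant `1`.
-/

theorem cos_acuteAngle {H : Type*} [NormedAddCommGroup H] [InnerProductSpace ℝ H] (x y : H) :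
    Real.cos (acuteAngle x y) = |⟪x, y⟫| / (‖x‖ * ‖y‖) :=
  Real.cos_arccos (neg_one_lt_zero.le.trans (by positivity))
    (div_le_one_of_le₀ (abs_real_inner_le_norm x y) (by positivity))

section Limits

open Filter Topology

variable {ι : Type*} {l : Filter ι}

theorem tendsto_sub_div_add_of_tendsto_div_zero {K : Type*} [DivisionRing K]
    [TopologicalSpace K] [IsTopologicalDivisionRing K] {a b : ι → K}
    (ha : ∀ᶠ i in l, a i ≠ 0) (h : Tendsto (fun i => b i / a i) l (𝓝 0)) :
    Tendsto (fun i => (a i - b i) / (a i + b i)) l (𝓝 1) := by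
  have hlim := (h.const_sub 1).div (h.const_add 1) (by rw [add_zero]; exact one_ne_zero)
  rw [sub_zero, add_zero, div_one] at hlim
  refine hlim.congr' ?_
  filter_upwards [ha] with i hi
  rw [Pi.div_apply, ← div_self hi, ← sub_div, ← add_div, div_div_div_cancel_right₀ hi]

theorem eventually_norm_ne_zero_of_tendsto_norm_add_div_zero {E : Type*}
    [SeminormedAddCommGroup E] {u v : ι → E} (hu : ∀ᶠ i in l, ‖u i‖ ≠ 0)
    (h : Tendsto (fun i => ‖u i + v i‖ / ‖u i‖) l (𝓝 0)) :
    ∀ᶠ i in l, ‖v i‖ ≠ 0 := by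
  filter_upwards [hu, h.eventually_ne zero_ne_one] with i hui hratio hvi
  exact hratio (by rw [norm_add_eq_norm_left _ hvi, div_self hui])

end Limits

section InnerProduct

open Filter Topology

variable {𝕜 H : Type*} [RCLike 𝕜] [SeminormedAddCommGroup H] [InnerProductSpace 𝕜 H]

theorem norm_mul_norm_sub_norm_add_le_norm_inner (u v : H) :
    ‖u‖ * (‖u‖ - ‖u + v‖) ≤ ‖inner 𝕜 u v‖ := by
  have hself : ‖u‖ * ‖u‖ ≤ ‖u‖ * ‖u + v‖ + ‖inner 𝕜 u v‖ := calc
    ‖u‖ * ‖u‖ = ‖inner 𝕜 u u‖ := by rw [← inner_self_re_eq_norm, inner_self_eq_norm_mul_norm]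
    _ = ‖inner 𝕜 u (u + v) - inner 𝕜 u v‖ := by rw [inner_add_right, add_sub_cancel_right]
    _ ≤ ‖inner 𝕜 u (u + v)‖ + ‖inner 𝕜 u v‖ := norm_sub_le _ _
    _ ≤ ‖u‖ * ‖u + v‖ + ‖inner 𝕜 u v‖ := by gcongr; exact norm_inner_le_norm _ _
  linarith

theorem norm_sub_norm_add_div_le_norm_inner_div {u v : H} (hu : ‖u‖ ≠ 0) (hv : ‖v‖ ≠ 0) :
    (‖u‖ - ‖u + v‖) / (‖u‖ + ‖u + v‖) ≤ ‖inner 𝕜 u v‖ / (‖u‖ * ‖v‖) := by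
  have hv_le : ‖v‖ ≤ ‖u‖ + ‖u + v‖ := by
    simpa only [add_sub_cancel_left, add_comm] using norm_sub_le (u + v) u
  rw [div_le_div_iff₀ (by positivity) (by positivity)]
  calc (‖u‖ - ‖u + v‖) * (‖u‖ * ‖v‖) = ‖u‖ * (‖u‖ - ‖u + v‖) * ‖v‖ := by ring
    _ ≤ ‖inner 𝕜 u v‖ * (‖u‖ + ‖u + v‖) :=
      mul_le_mul (norm_mul_norm_sub_norm_add_le_norm_inner u v) hv_le (norm_nonneg v)
        (norm_nonneg _)

theorem tendsto_norm_inner_div_of_tendsto_norm_add_div_zero {ι : Type*} {l : Filter ι}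
    {u v : ι → H} (hu : ∀ᶠ i in l, ‖u i‖ ≠ 0)
    (h : Tendsto (fun i => ‖u i + v i‖ / ‖u i‖) l (𝓝 0)) :
    Tendsto (fun i => ‖inner 𝕜 (u i) (v i)‖ / (‖u i‖ * ‖v i‖)) l (𝓝 1) := by
  refine tendsto_of_tendsto_of_tendsto_of_le_of_le'
    (tendsto_sub_div_add_of_tendsto_div_zero hu h) tendsto_const_nhds ?lower ?upper
  case lower =>
    filter_upwards [hu, eventually_norm_ne_zero_of_tendsto_norm_add_div_zero hu h] with i hui hvi
    exact norm_sub_norm_add_div_le_norm_inner_div hui hvi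
  case upper =>
    exact .of_forall fun i => div_le_one_of_le₀ (norm_inner_le_norm _ _) (by positivity)

theorem stmt9_general {ι : Type*} (l : Filter ι) :
    (∀ u v : H, ‖u‖ ≠ 0 → ‖v‖ ≠ 0 →
      (‖u‖ - ‖u + v‖) / (‖u‖ + ‖u + v‖) ≤ ‖inner 𝕜 u v‖ / (‖u‖ * ‖v‖)) ∧
    ∀ u v : ι → H, (∀ᶠ i in l, ‖u i‖ ≠ 0) →
      Tendsto (fun i => ‖u i + v i‖ / ‖u i‖) l (𝓝 0) →
      Tendsto (fun i => ‖inner 𝕜 (u i) (v i)‖ / (‖u i‖ * ‖v i‖)) l (𝓝 1) :=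
  ⟨fun _ _ => norm_sub_norm_add_div_le_norm_inner_div,
    fun _ _ => tendsto_norm_inner_div_of_tendsto_norm_add_div_zero⟩

end InnerProduct

theorem stmt9 {H : Type*} [NormedAddCommGroup H] [InnerProductSpace ℝ H] :
    (∀ u v : H, u ≠ 0 → v ≠ 0 →
      (‖u‖ - ‖u + v‖) / (‖u‖ + ‖u + v‖) ≤ |⟪u, v⟫| / (‖u‖ * ‖v‖)) ∧
    ∀ u v : ℕ → H, (∀ k, u k ≠ 0) → (∀ k, v k ≠ 0) →
      Filter.Tendsto (fun k => ‖u k + v k‖ / ‖u k‖) Filter.atTop (nhds 0) →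
      Filter.Tendsto (fun k => Real.cos (acuteAngle (u k) (v k))) Filter.atTop (nhds 1) := by
  simp only [cos_acuteAngle, ← Real.norm_eq_abs, ← norm_ne_zero_iff (E := H)]
  exact (stmt9_general Filter.atTop).imp_right fun h u v hu _ => h u v (.of_forall hu)
end

section
/- Let H be a real Hilbert space, M ⊆ H a closed linear subspace, r_p, r₁, …, r_k ∈ [0,1) with arcsin r_p + Σ_{j=1}^k arcsin r_j ≤ π/2, and let G ⊆ S(M, r_p) be any subset. For each j = 1, …, k let Δ_j : H → H be a map satisfying ‖Δ_j u‖ ≤ r_j ‖u‖ for all u ∈ H. Then every element of the image set (I + Δ_k) ∘ ⋯ ∘ (I + Δ_1)(G) belongs to S(M, sin(arcsin r_p + Σ_{j=1}^k arcsin r_j)), where I denotes the identity map on H. -/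
/-- The composition `(I + Δ_k) ∘ ⋯ ∘ (I + Δ_1)`, where `I` is the identity map. -/
def chain {H : Type*} [AddCommGroup H] : (k : ℕ) → (Fin k → H → H) → H → H
  | 0, _ => id
  | k + 1, Δ => (fun x => x + Δ (Fin.last k) x) ∘ chain k (fun j => Δ j.castSucc)

/-!
For `θ < π / 2`, membership of `v ≠ 0` in `S(M, sin θ)` says that rays of `M` come arbitrarily close
to making an angle at most `θ` with `v`: the point of a ray nearest to `v`, relative to its *own*
norm, is the one at which the segment to `v` is orthogonal to `v`, and its relative distance is the
sine of the angle. In the same way `‖Δ u‖ ≤ r ‖u‖` bounds the angle between `u` and `u + Δ u` by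
`arcsin r`. The triangle inequality for angles then adds up the `arcsin`s, so only the conical
structure of `M` matters.
-/

open Filter InnerProductGeometry Topology

section Angle

variable {H : Type*} [NormedAddCommGroup H] [InnerProductSpace ℝ H] {x y : H}

lemma sin_angle_mul_norm_right_le_norm_sub (x y : H) : Real.sin (angle x y) * ‖y‖ ≤ ‖x - y‖ := by
  rw [angle_comm, sin_angle_mul_norm_eq_sin_angle_mul_norm, norm_sub_rev y x]
  exact mul_le_of_le_one_left (norm_nonneg _) (Real.sin_le_one _)

lemma angle_le_pi_div_two_of_norm_sub_le (h : ‖x - y‖ ≤ ‖y‖) : angle x y ≤ Real.pi / 2 := by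
  have hinner : 0 ≤ inner ℝ x y := by
    have hsq : ‖x - y‖ ^ 2 ≤ ‖y‖ ^ 2 := by gcongr
    rw [norm_sub_sq_real] at hsq
    linarith [sq_nonneg ‖x‖]
  exact Real.arccos_le_pi_div_two.2 (by positivity)

lemma angle_le_arcsin_of_norm_sub_le {r : ℝ} (hx : x ≠ 0) (hr : r ≤ 1)
    (h : ‖x - y‖ ≤ r * ‖y‖) : angle x y ≤ Real.arcsin r := by
  have hy : 0 < ‖y‖ := by
    refine norm_pos_iff.2 fun hy ↦ hx ?_
    simpa [hy] using h
  have hacute : angle x y ≤ Real.pi / 2 :=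
    angle_le_pi_div_two_of_norm_sub_le (h.trans (mul_le_of_le_one_left hy.le hr))
  rw [Real.le_arcsin_iff_sin_le' ⟨by linarith [angle_nonneg x y, Real.pi_pos], hacute⟩]
  exact le_of_mul_le_mul_right ((sin_angle_mul_norm_right_le_norm_sub x y).trans h) hy

lemma exists_pos_norm_sub_smul_eq_sin_angle_mul (h : angle x y < Real.pi / 2) :
    ∃ c : ℝ, 0 < c ∧ ‖x - c • y‖ = Real.sin (angle x y) * ‖c • y‖ := by
  have hx : x ≠ 0 := by
    rintro rfl
    simp at h
  have hy : y ≠ 0 := by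
    rintro rfl
    simp at h
  have hcos : 0 < Real.cos (angle x y) :=
    Real.cos_pos_of_mem_Ioo ⟨by linarith [angle_nonneg x y, Real.pi_pos], h⟩
  -- This choice puts the right angle of the triangle `0, x, c • y` at `x`.
  obtain ⟨c, hc, hright⟩ : ∃ c : ℝ, 0 < c ∧ ‖x‖ = ‖c • y‖ * Real.cos (angle x y) := by
    refine ⟨‖x‖ / (‖y‖ * Real.cos (angle x y)), by positivity, ?_⟩
    rw [norm_smul, Real.norm_of_nonneg (by positivity)]
    field_simp
  refine ⟨c, hc, (sq_eq_sq₀ (norm_nonneg _)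
    (mul_nonneg (sin_angle_nonneg x y) (norm_nonneg _))).1 ?_⟩
  rw [sq, norm_sub_sq_eq_norm_sq_add_norm_sq_sub_two_mul_norm_mul_norm_mul_cos_angle,
    angle_smul_right_of_pos x y hc, hright, mul_pow, Real.sin_sq]
  ring

end Angle

section ConeNbhd

variable {H : Type*} [NormedAddCommGroup H] [InnerProductSpace ℝ H] {M : Set H} {u v : H} {r : ℝ}

lemma coneNbhd_singleton_zero (hr : 0 ≤ r) : coneNbhd ({0} : Set H) r = Set.univ := by
  refine Set.eq_univ_of_forall fun v ↦ Or.inl ?_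
  -- The set of ratios is empty, and `sInf ∅ = 0` in `ℝ`.
  simpa using hr

lemma mem_coneNbhd_of_norm_sub_le (hu : u ∈ M) (hu0 : u ≠ 0) (h : ‖v - u‖ ≤ r * ‖u‖) :
    v ∈ coneNbhd M r := by
  have hbdd : BddBelow {d : ℝ | ∃ u ∈ M, u ≠ 0 ∧ d = ‖v - u‖ / ‖u‖} := by
    refine ⟨0, ?_⟩
    rintro _ ⟨u, -, -, rfl⟩
    positivity
  exact Or.inl ((csInf_le hbdd ⟨u, hu, hu0, rfl⟩).trans
    ((div_le_iff₀ (norm_pos_iff.2 hu0)).2 h))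

lemma exists_norm_sub_lt_of_mem_coneNbhd {r' : ℝ} (hM : ∃ u ∈ M, u ≠ 0) (hv0 : v ≠ 0)
    (hv : v ∈ coneNbhd M r) (hr : r < r') : ∃ u ∈ M, ‖v - u‖ < r' * ‖u‖ := by
  have hne : {d : ℝ | ∃ u ∈ M, u ≠ 0 ∧ d = ‖v - u‖ / ‖u‖}.Nonempty :=
    let ⟨u, hu, hu0⟩ := hM
    ⟨_, u, hu, hu0, rfl⟩
  obtain ⟨_, ⟨u, hu, hu0, rfl⟩, hlt⟩ :=
    exists_lt_of_csInf_lt hne ((hv.resolve_right hv0).trans_lt hr)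
  exact ⟨u, hu, (div_lt_iff₀ (norm_pos_iff.2 hu0)).1 hlt⟩

lemma mem_coneNbhd_of_tendsto {ι : Type*} {l : Filter ι} [l.NeBot] {f : ι → ℝ}
    (hf : Tendsto f l (𝓝 r)) (h : ∀ᶠ i in l, v ∈ coneNbhd M (f i)) : v ∈ coneNbhd M r := by
  rcases eq_or_ne v 0 with hv0 | hv0
  · exact Or.inr hv0
  · exact Or.inl (ge_of_tendsto hf (h.mono fun i hi ↦ hi.resolve_right hv0))

lemma coneNbhd_one (hM : ∀ ⦃c : ℝ⦄, 0 < c → ∀ ⦃u⦄, u ∈ M → c • u ∈ M) (hM0 : ∃ u ∈ M, u ≠ 0) :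
    coneNbhd M 1 = Set.univ := by
  obtain ⟨u, hu, hu0⟩ := hM0
  -- The distance from `v` to `c • u`, relative to `‖c • u‖`, tends to `1` as `c → ∞`.
  refine Set.eq_univ_of_forall fun v ↦ ?_
  have hlim : Tendsto (fun c : ℝ ↦ 1 + ‖v‖ / ‖u‖ * c⁻¹) atTop (𝓝 1) := by
    simpa using (tendsto_inv_atTop_zero.const_mul (‖v‖ / ‖u‖)).const_add 1
  refine mem_coneNbhd_of_tendsto hlim ((eventually_gt_atTop 0).mono fun c hc ↦ ?_)
  refine mem_coneNbhd_of_norm_sub_le (hM hc hu) (smul_ne_zero hc.ne' hu0) ?_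
  calc ‖v - c • u‖ ≤ ‖v‖ + ‖c • u‖ := norm_sub_le _ _
    _ = (1 + ‖v‖ / ‖u‖ * c⁻¹) * ‖c • u‖ := by
      rw [norm_smul, Real.norm_of_nonneg hc.le]
      field_simp
      ring

lemma mem_coneNbhd_sin_of_angle_le {θ : ℝ}
    (hM : ∀ ⦃c : ℝ⦄, 0 < c → ∀ ⦃u⦄, u ∈ M → c • u ∈ M) (hu : u ∈ M)
    (hθ : θ < Real.pi / 2) (h : angle v u ≤ θ) : v ∈ coneNbhd M (Real.sin θ) := by
  have hacute : angle v u < Real.pi / 2 := h.trans_lt hθ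
  have hu0 : u ≠ 0 := by
    rintro rfl
    simp at hacute
  obtain ⟨c, hc, hdist⟩ := exists_pos_norm_sub_smul_eq_sin_angle_mul hacute
  refine mem_coneNbhd_of_norm_sub_le (hM hc hu) (smul_ne_zero hc.ne' hu0) ?_
  have hsin : Real.sin (angle v u) ≤ Real.sin θ :=
    Real.sin_le_sin_of_le_of_le_pi_div_two
      (by linarith [angle_nonneg v u, Real.pi_pos]) hθ.le h
  rw [hdist]
  gcongr

-- The infimum defining `coneNbhd` may fail to be attained, hence radii slightly above `r`.
lemma eventually_exists_angle_le_of_mem_coneNbhd (hM : ∃ u ∈ M, u ≠ 0) (hr : r < 1)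
    (hv0 : v ≠ 0) (hv : v ∈ coneNbhd M r) :
    ∀ᶠ r' in 𝓝[>] r, ∃ u ∈ M, angle v u ≤ Real.arcsin r' := by
  filter_upwards [Ioc_mem_nhdsGT hr] with r' hr'
  obtain ⟨u, hu, hlt⟩ := exists_norm_sub_lt_of_mem_coneNbhd hM hv0 hv hr'.1
  exact ⟨u, hu, angle_le_arcsin_of_norm_sub_le hv0 hr'.2 hlt.le⟩

lemma mem_coneNbhd_sin_arcsin_add {w : H} {s : ℝ}
    (hM : ∀ ⦃c : ℝ⦄, 0 < c → ∀ ⦃u⦄, u ∈ M → c • u ∈ M) (hM0 : ∃ u ∈ M, u ≠ 0)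
    (hr : r < 1) (hs : Real.arcsin r + s ≤ Real.pi / 2) (hv0 : v ≠ 0) (hv : v ∈ coneNbhd M r)
    (hw : angle w v ≤ s) : w ∈ coneNbhd M (Real.sin (Real.arcsin r + s)) := by
  rcases hs.eq_or_lt with hs | hs
  · rw [hs, Real.sin_pi_div_two, coneNbhd_one hM hM0]
    exact Set.mem_univ w
  have hcont : Tendsto (fun r' ↦ Real.arcsin r' + s) (𝓝[>] r) (𝓝 (Real.arcsin r + s)) :=
    (Real.continuous_arcsin.tendsto r).mono_left nhdsWithin_le_nhds |>.add_const s
  refine mem_coneNbhd_of_tendsto ((Real.continuous_sin.tendsto _).comp hcont) ?_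
  filter_upwards [eventually_exists_angle_le_of_mem_coneNbhd hM0 hr hv0 hv,
    hcont.eventually_lt_const hs] with r' ⟨u, hu, hvu⟩ hlt
  refine mem_coneNbhd_sin_of_angle_le hM hu hlt ?_
  linarith [angle_le_angle_add_angle w v u]

end ConeNbhd

lemma chain_apply_zero {H : Type*} [AddCommGroup H] {k : ℕ} {Δ : Fin k → H → H}
    (hΔ : ∀ j, Δ j 0 = 0) : chain k Δ 0 = 0 := by
  induction k with
  | zero => rfl
  | succ k ih => simp [chain, ih fun j ↦ hΔ j.castSucc, hΔ]

lemma angle_chain_le_sum_arcsin {H : Type*} [NormedAddCommGroup H] [InnerProductSpace ℝ H]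
    {k : ℕ} {r : Fin k → ℝ} (hr : ∀ j, r j ≤ 1) {Δ : Fin k → H → H}
    (hΔ : ∀ j u, ‖Δ j u‖ ≤ r j * ‖u‖) {v : H} (hv : chain k Δ v ≠ 0) :
    angle (chain k Δ v) v ≤ ∑ j, Real.arcsin (r j) := by
  induction k with
  | zero => simpa [chain] using (angle_self hv).le
  | succ k ih =>
    set w := chain k (fun j ↦ Δ j.castSucc) v
    have hchain : chain (k + 1) Δ v = w + Δ (Fin.last k) w := rfl
    rw [hchain] at hv ⊢
    have hw : w ≠ 0 := by
      intro hw
      apply hv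
      simpa [hw] using hΔ (Fin.last k) 0
    have hlast : angle (w + Δ (Fin.last k) w) w ≤ Real.arcsin (r (Fin.last k)) :=
      angle_le_arcsin_of_norm_sub_le hv (hr _) (by simpa using hΔ (Fin.last k) w)
    have hinit : angle w v ≤ ∑ j : Fin k, Real.arcsin (r j.castSucc) :=
      ih (fun j ↦ hr _) (fun j ↦ hΔ _) hw
    calc angle (w + Δ (Fin.last k) w) v
        ≤ angle (w + Δ (Fin.last k) w) w + angle w v := angle_le_angle_add_angle _ _ _
      _ ≤ Real.arcsin (r (Fin.last k)) + ∑ j : Fin k, Real.arcsin (r j.castSucc) :=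
          add_le_add hlast hinit
      _ = ∑ j, Real.arcsin (r j) := by rw [Fin.sum_univ_castSucc, add_comm]

theorem stmt10_general {H : Type*} [NormedAddCommGroup H] [InnerProductSpace ℝ H]
    {M : Set H} (hne : M.Nonempty) (hM : ∀ ⦃c : ℝ⦄, 0 < c → ∀ ⦃u⦄, u ∈ M → c • u ∈ M)
    {k : ℕ} {rp : ℝ} (hrp : 0 ≤ rp ∧ rp < 1)
    {r : Fin k → ℝ} (hr : ∀ j, 0 ≤ r j ∧ r j < 1)
    (hsum : Real.arcsin rp + ∑ j, Real.arcsin (r j) ≤ Real.pi / 2)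
    {Δ : Fin k → H → H} (hΔ : ∀ j, ∀ u : H, ‖Δ j u‖ ≤ r j * ‖u‖) :
    Set.MapsTo (chain k Δ) (coneNbhd M rp)
      (coneNbhd M (Real.sin (Real.arcsin rp + ∑ j, Real.arcsin (r j)))) := by
  intro g hg
  by_cases hM0 : ∃ u ∈ M, u ≠ 0
  · rcases eq_or_ne (chain k Δ g) 0 with hchain | hchain
    · exact Or.inr hchain
    have hg0 : g ≠ 0 := by
      rintro rfl
      exact hchain (chain_apply_zero fun j ↦ by simpa using hΔ j 0)
    exact mem_coneNbhd_sin_arcsin_add hM hM0 hrp.2 hsum hg0 hg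
      (angle_chain_le_sum_arcsin (fun j ↦ (hr j).2.le) hΔ hchain)
  · push Not at hM0
    have hθ : 0 ≤ Real.arcsin rp + ∑ j, Real.arcsin (r j) :=
      add_nonneg (Real.arcsin_nonneg.2 hrp.1)
        (Finset.sum_nonneg fun j _ ↦ Real.arcsin_nonneg.2 (hr j).1)
    rw [Set.eq_singleton_iff_nonempty_unique_mem.2 ⟨hne, hM0⟩, coneNbhd_singleton_zero
      (Real.sin_nonneg_of_nonneg_of_le_pi hθ (hsum.trans (by linarith [Real.pi_pos])))]
    exact Set.mem_univ _

theorem stmt10 {H : Type*} [NormedAddCommGroup H] [InnerProductSpace ℝ H] [CompleteSpace H]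
    (M : Submodule ℝ H) (hMc : IsClosed (M : Set H))
    (k : ℕ) (rp : ℝ) (hrp : 0 ≤ rp ∧ rp < 1)
    (r : Fin k → ℝ) (hr : ∀ j, 0 ≤ r j ∧ r j < 1)
    (hsum : Real.arcsin rp + ∑ j, Real.arcsin (r j) ≤ Real.pi / 2)
    (G : Set H) (hG : G ⊆ coneNbhd (M : Set H) rp)
    (Δ : Fin k → H → H) (hΔ : ∀ j, ∀ u : H, ‖Δ j u‖ ≤ r j * ‖u‖) :
    ∀ g ∈ G, chain k Δ g ∈
      coneNbhd (M : Set H) (Real.sin (Real.arcsin rp + ∑ j, Real.arcsin (r j))) :=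
  fun _ hg ↦ stmt10_general ⟨0, M.zero_mem⟩ (fun c _ _ hu ↦ M.smul_mem c hu) hrp hr hsum hΔ (hG hg)
end

section
/- Let H be a real normed vector space, L > 0, r₁, …, r_k ∈ [0,1), and for each j = 1, …, k let Δ_j : H → H satisfy ‖Δ_j x − Δ_j y‖ ≤ L‖x − y‖ and ‖Δ_j x‖ ≤ r_j‖x‖ for all x, y ∈ H. For s ∈ [0,1] define Φ_s := (I + s·Δ_k) ∘ ⋯ ∘ (I + s·Δ_1). Then for every ε > 0 there exists δ > 0 such that for all τ ≥ 0 with τ + δ ≤ 1 and every nonzero x ∈ H: ‖Φ_{τ+δ}(x) − Φ_τ(x)‖ ≤ ε·‖Φ_τ(x)‖. -/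
/-!
Each factor `I + s • Δ_j` with `‖s‖ ≤ 1` is Lipschitz and, as `r_j < 1`, bounded below:
`(1 - r_j) * ‖u‖ ≤ ‖u + s • Δ_j u‖`. The upper estimate lets a perturbation of the input and of the
parameter pass through the factor, and the lower estimate turns it back into a perturbation
relative to the size of the output. By induction on the number of factors, the relative
perturbation of `Φ_s x` is at most a constant times the perturbation of `s`, uniformly in `x`.
-/

open scoped NNReal

section

variable {H : Type*} [SeminormedAddCommGroup H]

theorem one_sub_mul_norm_le_norm_add {r : ℝ} {u d : H} (hd : ‖d‖ ≤ r * ‖u‖) :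
    (1 - r) * ‖u‖ ≤ ‖u + d‖ := by
  linarith [norm_le_add_norm_add u d]

variable {𝕜 : Type*} [SeminormedRing 𝕜] [Module 𝕜 H] [IsBoundedSMul 𝕜 H]

theorem norm_add_smul_sub_add_smul_le {K : ℝ≥0} {D : H → H} (hD : LipschitzWith K D)
    (σ τ : 𝕜) (v u : H) :
    ‖(v + σ • D v) - (u + τ • D u)‖ ≤ (1 + ‖σ‖ * K) * ‖v - u‖ + ‖σ - τ‖ * ‖D u‖ :=
  calc ‖(v + σ • D v) - (u + τ • D u)‖
      = ‖(v - u) + σ • (D v - D u) + (σ - τ) • D u‖ := by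
        rw [smul_sub, sub_smul]
        abel_nf
    _ ≤ ‖v - u‖ + ‖σ • (D v - D u)‖ + ‖(σ - τ) • D u‖ := norm_add₃_le
    _ ≤ ‖v - u‖ + ‖σ‖ * (K * ‖v - u‖) + ‖σ - τ‖ * ‖D u‖ := by
        gcongr
        · exact (norm_smul_le _ _).trans (by gcongr; exact hD.norm_sub_le v u)
        · exact norm_smul_le _ _
    _ = (1 + ‖σ‖ * K) * ‖v - u‖ + ‖σ - τ‖ * ‖D u‖ := by ring

theorem norm_add_smul_sub_add_smul_le_mul_norm {K : ℝ≥0} {r c : ℝ} {D : H → H}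
    (hD : LipschitzWith K D) (hr : r < 1)
    {σ τ : 𝕜} (hσ : ‖σ‖ ≤ 1) (hτ : ‖τ‖ ≤ 1) {v u : H} (hbound : ‖D u‖ ≤ r * ‖u‖)
    (hc : 0 ≤ c) (hvu : ‖v - u‖ ≤ c * ‖u‖) :
    ‖(v + σ • D v) - (u + τ • D u)‖ ≤
      ((1 + K) * c + ‖σ - τ‖) / (1 - r) * ‖u + τ • D u‖ := by
  have hr' : 0 < 1 - r := sub_pos.2 hr
  have hsmul : ‖τ • D u‖ ≤ r * ‖u‖ :=
    calc ‖τ • D u‖ ≤ ‖τ‖ * ‖D u‖ := norm_smul_le _ _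
      _ ≤ ‖D u‖ := mul_le_of_le_one_left (norm_nonneg _) hτ
      _ ≤ r * ‖u‖ := hbound
  have hDu : ‖D u‖ ≤ ‖u‖ := hbound.trans (mul_le_of_le_one_left (norm_nonneg _) hr.le)
  calc ‖(v + σ • D v) - (u + τ • D u)‖
      ≤ (1 + ‖σ‖ * K) * ‖v - u‖ + ‖σ - τ‖ * ‖D u‖ := norm_add_smul_sub_add_smul_le hD σ τ v u
    _ ≤ (1 + 1 * K) * (c * ‖u‖) + ‖σ - τ‖ * ‖u‖ := by gcongr
    _ = ((1 + K) * c + ‖σ - τ‖) / (1 - r) * ((1 - r) * ‖u‖) := by field_simp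
    _ ≤ ((1 + K) * c + ‖σ - τ‖) / (1 - r) * ‖u + τ • D u‖ := by
        gcongr
        exact one_sub_mul_norm_le_norm_add hsmul

variable (𝕜) in
theorem exists_norm_chain_smul_sub_le_mul_norm (k : ℕ) {K : Fin k → ℝ≥0} {r : Fin k → ℝ}
    {Δ : Fin k → H → H} (hΔ : ∀ j, LipschitzWith (K j) (Δ j)) (hr : ∀ j, r j < 1)
    (hbound : ∀ j x, ‖Δ j x‖ ≤ r j * ‖x‖) :
    ∃ C > (0 : ℝ), ∀ σ τ : 𝕜, ‖σ‖ ≤ 1 → ‖τ‖ ≤ 1 → ∀ x : H,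
      ‖chain k (fun j y => σ • Δ j y) x - chain k (fun j y => τ • Δ j y) x‖ ≤
        C * ‖σ - τ‖ * ‖chain k (fun j y => τ • Δ j y) x‖ := by
  induction k with
  | zero =>
    refine ⟨1, one_pos, fun σ τ _ _ x => ?_⟩
    simp only [chain, sub_self, norm_zero]
    positivity
  | succ k ih =>
    obtain ⟨C, hC, hchain⟩ :=
      ih (fun j => hΔ j.castSucc) (fun j => hr j.castSucc) (fun j => hbound j.castSucc)
    have hlast : 0 < 1 - r (Fin.last k) := sub_pos.2 (hr _)
    refine ⟨((1 + K (Fin.last k)) * C + 1) / (1 - r (Fin.last k)), by positivity,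
      fun σ τ hσ hτ x => ?_⟩
    have hcoeff : ((1 + K (Fin.last k)) * C + 1) / (1 - r (Fin.last k)) * ‖σ - τ‖ =
        ((1 + K (Fin.last k)) * (C * ‖σ - τ‖) + ‖σ - τ‖) / (1 - r (Fin.last k)) := by ring
    rw [hcoeff]
    exact norm_add_smul_sub_add_smul_le_mul_norm (hΔ _) (hr _) hσ hτ (hbound _ _) (by positivity)
      (hchain σ τ hσ hτ x)

variable (𝕜) in
theorem stmt14_general (k : ℕ) {K : Fin k → ℝ≥0} {r : Fin k → ℝ}
    {Δ : Fin k → H → H} (hΔ : ∀ j, LipschitzWith (K j) (Δ j)) (hr : ∀ j, r j < 1)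
    (hbound : ∀ j x, ‖Δ j x‖ ≤ r j * ‖x‖) {ε : ℝ} (hε : 0 < ε) :
    ∃ δ > (0 : ℝ), ∀ σ τ : 𝕜, ‖σ‖ ≤ 1 → ‖τ‖ ≤ 1 → ‖σ - τ‖ ≤ δ → ∀ x : H,
      ‖chain k (fun j y => σ • Δ j y) x - chain k (fun j y => τ • Δ j y) x‖ ≤
        ε * ‖chain k (fun j y => τ • Δ j y) x‖ := by
  obtain ⟨C, hC, hchain⟩ := exists_norm_chain_smul_sub_le_mul_norm 𝕜 k hΔ hr hbound
  refine ⟨ε / C, by positivity, fun σ τ hσ hτ hστ x => (hchain σ τ hσ hτ x).trans ?_⟩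
  gcongr
  exact (le_div_iff₀' hC).1 hστ

end

theorem stmt14 {H : Type*} [NormedAddCommGroup H] [NormedSpace ℝ H]
    (L : ℝ) (hL : 0 < L)
    (k : ℕ) (r : Fin k → ℝ) (hr : ∀ j, 0 ≤ r j ∧ r j < 1)
    (Δ : Fin k → H → H)
    (hLip : ∀ j, ∀ x y : H, ‖Δ j x - Δ j y‖ ≤ L * ‖x - y‖)
    (hbound : ∀ j, ∀ x : H, ‖Δ j x‖ ≤ r j * ‖x‖) :
    ∀ ε > (0 : ℝ), ∃ δ > (0 : ℝ), ∀ τ : ℝ, 0 ≤ τ → τ + δ ≤ 1 → ∀ x : H, x ≠ 0 →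
      ‖chain k (fun j y => (τ + δ) • Δ j y) x - chain k (fun j y => τ • Δ j y) x‖ ≤
        ε * ‖chain k (fun j y => τ • Δ j y) x‖ := by
  intro ε hε
  obtain ⟨δ, hδ, h⟩ := stmt14_general ℝ k
    (fun j => LipschitzWith.of_dist_le' fun x y => by simpa only [dist_eq_norm] using hLip j x y)
    (fun j => (hr j).2) hbound hε
  exact ⟨δ, hδ, fun τ hτ hs x _ => h (τ + δ) τ (by rw [Real.norm_of_nonneg] <;> linarith)
    (by rw [Real.norm_of_nonneg] <;> linarith) (by rw [Real.norm_of_nonneg] <;> linarith) x⟩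
end

section
/- Let H be a real inner product space and let u, v ∈ H be nonzero. Then inf_{t ∈ ℝ, t ≠ 0} ‖v − t·u‖ / (|t|·‖u‖) = sin θ(u,v) = √(1 − ⟨u,v⟩² / (‖u‖²·‖v‖²)). -/
open RealInnerProductSpace

/-!
Substituting `s = t⁻¹` turns the quotient `‖v - t • u‖ / (|t| ‖u‖)` into `‖u - s • v‖ / ‖u‖`.
Excluding `s = 0` does not affect the infimum, because the nonzero multiples of `v` are dense in the
line `ℝ ∙ v`. The infimum is therefore the distance from `u` to that line divided by `‖u‖`, and
Pythagoras applied to the orthogonal projection identifies the distance as `‖u‖ sin θ(u, v)`.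
-/

section NormedSpace

open Metric Pointwise Topology

theorem closure_image_smul_compl_zero {R M : Type*} [Semiring R] [TopologicalSpace R]
    [(𝓝[≠] (0 : R)).NeBot] [AddCommMonoid M] [Module R M] [TopologicalSpace M]
    [ContinuousSMul R M] (v : M) :
    closure ((fun s : R => s • v) '' {0}ᶜ) = closure (R ∙ v : Set M) := by
  rw [← closure_image_closure (by fun_prop), closure_compl_singleton, Set.image_univ,
    Submodule.span_singleton_eq_range]

variable {𝕜 E : Type*} [SeminormedAddCommGroup E]

theorem norm_sub_smul_div_norm_smul [NormedField 𝕜] [NormedSpace 𝕜 E] {t : 𝕜} (ht : t ≠ 0)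
    (u v : E) : ‖v - t • u‖ / (‖t‖ * ‖u‖) = ‖u - t⁻¹ • v‖ / ‖u‖ := by
  have factor : v - t • u = -(t • (u - t⁻¹ • v)) := by
    rw [smul_sub, smul_inv_smul₀ ht, neg_sub]
  rw [factor, norm_neg, norm_smul, mul_div_mul_left _ _ (norm_ne_zero_iff.2 ht)]

variable [NontriviallyNormedField 𝕜] [NormedSpace 𝕜 E]

theorem sInf_norm_sub_smul_div_eq_infDist_div (u v : E) :
    sInf {d : ℝ | ∃ t : 𝕜, t ≠ 0 ∧ d = ‖v - t • u‖ / (‖t‖ * ‖u‖)} =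
      infDist u (𝕜 ∙ v : Set E) / ‖u‖ := by
  set L : Set E := (fun s : 𝕜 => s • v) '' {0}ᶜ
  have hL : L.Nonempty := ⟨_, 1, one_ne_zero, rfl⟩
  have quotients_eq : {d : ℝ | ∃ t : 𝕜, t ≠ 0 ∧ d = ‖v - t • u‖ / (‖t‖ * ‖u‖)} =
      ‖u‖⁻¹ • (dist u '' L) := by
    ext d
    constructor
    · rintro ⟨t, ht, rfl⟩
      refine ⟨_, ⟨_, ⟨t⁻¹, inv_ne_zero ht, rfl⟩, rfl⟩, ?_⟩
      simp only [norm_sub_smul_div_norm_smul ht, dist_eq_norm, smul_eq_mul, div_eq_inv_mul]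
    · rintro ⟨_, ⟨_, ⟨s, hs, rfl⟩, rfl⟩, rfl⟩
      refine ⟨s⁻¹, inv_ne_zero hs, ?_⟩
      simp only [norm_sub_smul_div_norm_smul (inv_ne_zero hs), inv_inv, dist_eq_norm, smul_eq_mul,
        div_eq_inv_mul]
  calc
    sInf {d : ℝ | ∃ t : 𝕜, t ≠ 0 ∧ d = ‖v - t • u‖ / (‖t‖ * ‖u‖)}
        = ‖u‖⁻¹ * sInf (dist u '' L) := by
      rw [quotients_eq, Real.sInf_smul_of_nonneg (by positivity), smul_eq_mul]
    _ = ‖u‖⁻¹ * infDist u L := by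
      rw [(isGLB_infDist hL).csInf_eq (hL.image _)]
    _ = infDist u (𝕜 ∙ v : Set E) / ‖u‖ := by
      rw [← infDist_closure, closure_image_smul_compl_zero, infDist_closure, div_eq_inv_mul]

end NormedSpace

section InnerProductSpace

open Metric

theorem infDist_eq_norm_sub_starProjection {𝕜 E : Type*} [RCLike 𝕜] [NormedAddCommGroup E]
    [InnerProductSpace 𝕜 E] (K : Submodule 𝕜 E) [K.HasOrthogonalProjection] (x : E) :
    infDist x (K : Set E) = ‖x - K.starProjection x‖ := by
  simp only [infDist_eq_iInf, dist_eq_norm, K.starProjection_minimal, SetLike.coe_sort_coe]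

theorem sq_infDist_span_singleton {𝕜 E : Type*} [RCLike 𝕜] [NormedAddCommGroup E]
    [InnerProductSpace 𝕜 E] (x v : E) :
    infDist x (𝕜 ∙ v : Set E) ^ 2 = ‖x‖ ^ 2 - (‖inner 𝕜 v x‖ / ‖v‖) ^ 2 := by
  have norm_proj : ‖(𝕜 ∙ v).starProjection x‖ = ‖inner 𝕜 v x‖ / ‖v‖ := by
    rw [Submodule.starProjection_singleton, norm_smul, norm_div, RCLike.norm_ofReal,
      abs_of_nonneg (by positivity), div_mul_eq_mul_div]
    rcases eq_or_ne ‖v‖ 0 with hv | hv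
    · simp only [hv, mul_zero, zero_div, div_zero]
    · field_simp
  rw [infDist_eq_norm_sub_starProjection, ← norm_proj,
    Submodule.norm_sq_eq_add_norm_sq_starProjection x (𝕜 ∙ v),
    Submodule.starProjection_orthogonal_val, add_sub_cancel_left]

variable {H : Type*} [NormedAddCommGroup H] [InnerProductSpace ℝ H]

theorem sin_acuteAngle (x y : H) :
    Real.sin (acuteAngle x y) = √(1 - ⟪x, y⟫ ^ 2 / (‖x‖ ^ 2 * ‖y‖ ^ 2)) := by
  rw [acuteAngle, Real.sin_arccos, div_pow, sq_abs, mul_pow]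

theorem infDist_span_singleton_eq_norm_mul_sin_acuteAngle (x y : H) :
    infDist x (ℝ ∙ y : Set H) = ‖x‖ * Real.sin (acuteAngle x y) := by
  rcases eq_or_ne x 0 with rfl | hx
  · rw [infDist_zero_of_mem (zero_mem (ℝ ∙ y)), norm_zero, zero_mul]
  have sq_factor : infDist x (ℝ ∙ y : Set H) ^ 2 =
      ‖x‖ ^ 2 * (1 - ⟪x, y⟫ ^ 2 / (‖x‖ ^ 2 * ‖y‖ ^ 2)) := by
    have hx' : ‖x‖ ^ 2 ≠ 0 := by positivity
    rw [sq_infDist_span_singleton, real_inner_comm, div_pow, Real.norm_eq_abs, sq_abs, mul_sub,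
      mul_one, ← mul_div_assoc, mul_div_mul_left _ _ hx']
  rw [sin_acuteAngle, ← Real.sqrt_sq infDist_nonneg, sq_factor, Real.sqrt_mul (sq_nonneg _),
    Real.sqrt_sq (norm_nonneg _)]

end InnerProductSpace

theorem stmt16 {H : Type*} [NormedAddCommGroup H] [InnerProductSpace ℝ H]
    (u v : H) (hu : u ≠ 0) (hv : v ≠ 0) :
    sInf {d : ℝ | ∃ t : ℝ, t ≠ 0 ∧ d = ‖v - t • u‖ / (|t| * ‖u‖)} =
        Real.sin (acuteAngle u v) ∧
      Real.sin (acuteAngle u v) =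
        Real.sqrt (1 - ⟪u, v⟫ ^ 2 / (‖u‖ ^ 2 * ‖v‖ ^ 2)) := by
  refine ⟨?_, sin_acuteAngle u v⟩
  calc
    sInf {d : ℝ | ∃ t : ℝ, t ≠ 0 ∧ d = ‖v - t • u‖ / (|t| * ‖u‖)}
        = Metric.infDist u (ℝ ∙ v : Set H) / ‖u‖ := sInf_norm_sub_smul_div_eq_infDist_div u v
    _ = Real.sin (acuteAngle u v) := by
      rw [infDist_span_singleton_eq_norm_mul_sin_acuteAngle,
        mul_div_cancel_left₀ _ (norm_ne_zero_iff.2 hu)]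
end
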